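/- Let u : S¹ → ℝ be a smooth nonconstant function with mean zero, and let F = −u·u″ − H(u·H(u″)). Then F(θ) > 0 for every θ ∈ S¹. -/

import Mathlib

open MeasureTheory Real

/-- The `n`-th Fourier coefficient of a `2π`-periodic function `f : ℝ → ℝ`. -/
noncomputable def fourierC (f : ℝ → ℝ) (n : ℤ) : ℂ :=
  (1 / (2 * π)) * ∫ θ in (0:ℝ)..(2 * π), (f θ : ℂ) * Complex.exp (-Complex.I * (n : ℂ) * (θ : ℂ))

/-- The Hilbert transform on the circle, sending `Σ cₙ e^{inθ}` to `Σ (−i sgn n) cₙ e^{inθ}`. -/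
noncomputable def hilbertT (f : ℝ → ℝ) (θ : ℝ) : ℝ :=
  (∑' n : ℤ, -Complex.I * ((n.sign : ℤ) : ℂ) * fourierC f n *
    Complex.exp (Complex.I * (n : ℂ) * (θ : ℂ))).re

/-- The function `F = −u·u″ − H(u·H(u″))`. -/
noncomputable def Fmagic (u : ℝ → ℝ) (θ : ℝ) : ℝ :=
  -(u θ * deriv (deriv u) θ) - hilbertT (fun x => u x * hilbertT (deriv (deriv u)) x) θ

/-!
Write `u = ∑ cₙ eₙ` with `eₙ = e^{inθ}`, and put `aₙ = cₙ eₙ(θ)`. Then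
`F(θ) = ∑ₙₘ (1 - sgn(m - n) sgn m) m² āₙ aₘ`. As `F(θ)` is real, the kernel may be symmetrised in
`(n, m)`, which turns it into `min(n, m)₊² + min(-n, -m)₊²`; as `a₋ₙ = āₙ`, both summands contribute
equally, so `F(θ) = 2 ∑ₙₘ min(n, m)₊² āₙ aₘ`. Since `k²` is the sum of the first `k` odd numbers,
`min(n, m)₊² = ∑_{j ≥ 0} (2j + 1) 1_{n > j} 1_{m > j}`, whence
`F(θ) = 2 ∑_{j ≥ 0} (2j + 1) |∑_{n > j} aₙ|²`.
If all the tails `∑_{n > j} aₙ` vanished, then so would every `aₙ` with `n > 0`, and `u` would be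
constant.
-/

open scoped ComplexConjugate

local notation "𝕋" => AddCircle (2 * π)

local instance fact_zero_lt_two_pi : Fact (0 < 2 * π) := ⟨two_pi_pos⟩

section PositiveKernels

theorem hasSum_columns_of_hasSum_rows {α β E : Type*} [NormedAddCommGroup E] [CompleteSpace E]
    {g : α → β → E} {r : α → E} {c : β → E} {S : E} (hrow : ∀ i, HasSum (g i) (r i))
    (hcol : ∀ j, HasSum (fun i => g i j) (c j)) (hnorm : ∀ i, HasSum (fun j => ‖g i j‖) ‖r i‖)
    (hr : Summable fun i => ‖r i‖) (hS : HasSum r S) : HasSum c S := by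
  -- No cancellation occurs within a row, so `∑ ‖r i‖` controls the whole double family.
  have hg : Summable fun q : α × β => g q.1 q.2 := by
    refine Summable.of_norm ((summable_prod_of_nonneg fun _ => norm_nonneg _).2
      ⟨fun i => (hnorm i).summable, ?_⟩)
    simpa only [(hnorm _).tsum_eq] using hr
  have hgS : HasSum (fun q : α × β => g q.1 q.2) S := by
    simpa only [(hg.hasSum.prod_fiberwise hrow).unique hS] using hg.hasSum
  exact ((Equiv.prodComm β α).hasSum_iff.2 hgS).prod_fiberwise hcol

theorem hasSum_conj_mul {ι κ : Type*} {a : ι → ℂ} {b : κ → ℂ} {A B : ℂ} (ha : HasSum a A)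
    (hb : HasSum b B) : HasSum (fun p : ι × κ => conj (a p.1) * b p.2) (conj A * B) := by
  have hconj : HasSum (fun i => conj (a i)) (conj A) := Complex.hasSum_conj'.2 ha
  have hprod : Summable fun p : ι × κ => conj (a p.1) * b p.2 :=
    summable_mul_of_summable_norm (f := fun i => conj (a i)) hconj.summable.norm hb.summable.norm
  exact HasSum.mul (f := fun i => conj (a i)) hconj hb hprod

theorem hasSum_normSq_tsum_of_hasSum_kernel {ι J : Type*} {a : ι → ℂ} {s : J → Set ι} {w : J → ℝ}
    {κ : ι → ι → ℝ} {S : ℂ} (hw : ∀ j, 0 ≤ w j)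
    (hκ : ∀ i k, HasSum ({j | i ∈ s j ∧ k ∈ s j}.indicator w) (κ i k))
    (ha : Summable a) (hS : HasSum (fun p : ι × ι => κ p.1 p.2 * (conj (a p.1) * a p.2)) S) :
    HasSum (fun j => ((w j * ‖∑' i : s j, a i‖ ^ 2 : ℝ) : ℂ)) S := by
  have hW (i k j) : 0 ≤ {j | i ∈ s j ∧ k ∈ s j}.indicator w j :=
    Set.indicator_nonneg (fun j _ => hw j) j
  have hrow (p : ι × ι) : HasSum
      (fun j => (({j | p.1 ∈ s j ∧ p.2 ∈ s j}.indicator w j : ℝ) : ℂ) * (conj (a p.1) * a p.2))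
      (κ p.1 p.2 * (conj (a p.1) * a p.2)) :=
    (Complex.hasSum_ofReal.2 (hκ p.1 p.2)).mul_right _
  refine hasSum_columns_of_hasSum_rows hrow (fun j => ?_) (fun p => ?_) hS.summable.norm hS
  · have hcol : HasSum ((s j).indicator a) (∑' i : s j, a i) :=
      hasSum_subtype_iff_indicator.1 (ha.subtype _).hasSum
    rw [Complex.ofReal_mul, Complex.ofReal_pow, ← Complex.conj_mul']
    refine ((hasSum_conj_mul hcol hcol).mul_left (w j : ℂ)).congr_fun fun p => ?_
    by_cases h₁ : p.1 ∈ s j <;> by_cases h₂ : p.2 ∈ s j <;> simp [h₁, h₂]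
  · have hκ0 : 0 ≤ κ p.1 p.2 := (hκ p.1 p.2).nonneg (hW p.1 p.2)
    simp only [norm_mul _ (_ * _), Complex.norm_of_nonneg (hW _ _ _), Complex.norm_of_nonneg hκ0]
    exact (hκ p.1 p.2).mul_right _

end PositiveKernels

section SquareMin

theorem sum_range_odd (k : ℕ) : ∑ j ∈ Finset.range k, (2 * j + 1) = k ^ 2 := by
  induction k with
  | zero => rfl
  | succ k ih => rw [Finset.sum_range_succ, ih]; ring

theorem hasSum_odd_indicator_Ioi (n m : ℤ) :
    HasSum ({j : ℕ | n ∈ Set.Ioi (j : ℤ) ∧ m ∈ Set.Ioi (j : ℤ)}.indicator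
      fun j => (2 * j + 1 : ℝ)) ((min n m).toNat ^ 2 : ℝ) := by
  have hset : {j : ℕ | n ∈ Set.Ioi (j : ℤ) ∧ m ∈ Set.Ioi (j : ℤ)} =
      Finset.range (min n m).toNat := by
    ext j
    simp only [Set.mem_ofPred_eq, Set.mem_Ioi, Finset.coe_range, Set.mem_Iio, Int.lt_toNat,
      lt_min_iff]
  rw [hset, ← hasSum_subtype_iff_indicator]
  convert! Finset.hasSum (Finset.range (min n m).toNat) fun j : ℕ => (2 * j + 1 : ℝ)
  exact_mod_cast (sum_range_odd _).symm

theorem one_sub_sign_mul_sq_add_swap (n m : ℤ) :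
    (1 - (m - n).sign * m.sign) * m ^ 2 + (1 - (n - m).sign * n.sign) * n ^ 2 =
      2 * ((min n m).toNat ^ 2 + (min (-n) (-m)).toNat ^ 2) := by
  wlog h : n < m generalizing n m
  · obtain rfl | h := (not_lt.1 h).eq_or_lt
    · obtain hn | hn := le_total 0 m <;> simp [hn, two_mul]
    · rw [add_comm, this m n h, min_comm, min_comm (-m)]
  rw [min_eq_left h.le, min_eq_right (neg_le_neg h.le), Int.sign_eq_one_of_pos (sub_pos.2 h),
    Int.sign_eq_neg_one_of_neg (sub_neg.2 h)]
  rcases lt_trichotomy n 0 with hn | rfl | hn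
  · rw [Int.sign_eq_neg_one_of_neg hn]
    rcases lt_trichotomy m 0 with hm | rfl | hm
    · simp [Int.sign_eq_neg_one_of_neg hm, hn.le, hm.le]
    · simp [hn.le]
    · simp [Int.sign_eq_one_of_pos hm, hn.le, hm.le]
  · simp [Int.sign_eq_one_of_pos h, h.le]
  · simp [Int.sign_eq_one_of_pos hn, Int.sign_eq_one_of_pos (hn.trans h), hn.le, (hn.trans h).le]

end SquareMin

section HermitianForm

variable {a : ℤ → ℂ} {S : ℂ}

theorem hasSum_normSq_tsum_Ioi (ha : Summable a)
    (hS : HasSum (fun p : ℤ × ℤ =>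
      (((min p.1 p.2).toNat ^ 2 : ℝ) : ℂ) * (conj (a p.1) * a p.2)) S) :
    HasSum (fun j : ℕ => (2 * j + 1) * ‖∑' n : Set.Ioi (j : ℤ), a n‖ ^ 2) S.re := by
  have h := hasSum_normSq_tsum_of_hasSum_kernel (s := fun j : ℕ => Set.Ioi (j : ℤ))
    (fun j => by positivity) hasSum_odd_indicator_Ioi ha hS
  simpa only [Complex.ofReal_re] using Complex.hasSum_re h

theorem summable_min_sq_mul_conj_mul (ha : Summable a)
    (ha2 : Summable fun n : ℤ => (n : ℝ) ^ 2 * ‖a n‖) :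
    Summable fun p : ℤ × ℤ =>
      (((min p.1 p.2).toNat ^ 2 : ℝ) : ℂ) * (conj (a p.1) * a p.2) := by
  refine (ha.norm.mul_of_nonneg ha2 (fun _ => norm_nonneg _)
    fun n => by positivity).of_norm_bounded fun p => ?_
  have hmin : ((min p.1 p.2).toNat : ℝ) ^ 2 ≤ (p.2 : ℝ) ^ 2 := by
    have h : (min p.1 p.2).toNat ≤ p.2.natAbs := by omega
    calc ((min p.1 p.2).toNat : ℝ) ^ 2 ≤ (p.2.natAbs : ℝ) ^ 2 := by gcongr
      _ = (p.2 : ℝ) ^ 2 := by rw [Nat.cast_natAbs, Int.cast_abs, sq_abs]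
  rw [norm_mul, norm_mul, RCLike.norm_conj, Complex.norm_of_nonneg (by positivity), mul_left_comm]
  gcongr

theorem hasSum_normSq_tsum_Ioi_of_sign_kernel (hconj : ∀ n, a (-n) = conj (a n)) (ha : Summable a)
    (ha2 : Summable fun n : ℤ => (n : ℝ) ^ 2 * ‖a n‖)
    (hS : HasSum (fun p : ℤ × ℤ =>
      (((1 - (p.2 - p.1).sign * p.2.sign) * p.2 ^ 2 : ℤ) : ℂ) * (conj (a p.1) * a p.2)) S) :
    HasSum (fun j : ℕ => 2 * ((2 * j + 1) * ‖∑' n : Set.Ioi (j : ℤ), a n‖ ^ 2)) S.re := by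
  obtain ⟨P, hP⟩ := summable_min_sq_mul_conj_mul ha ha2
  have hneg : HasSum (fun p : ℤ × ℤ =>
      (((min (-p.1) (-p.2)).toNat ^ 2 : ℝ) : ℂ) * (conj (a p.1) * a p.2)) (conj P) := by
    refine (((Equiv.neg ℤ).prodCongr (Equiv.neg ℤ)).hasSum_iff.2
      (Complex.hasSum_conj'.2 hP)).congr_fun fun p => ?_
    simp [hconj]
  have hswap : HasSum (fun p : ℤ × ℤ =>
      (((1 - (p.1 - p.2).sign * p.1.sign) * p.1 ^ 2 : ℤ) : ℂ) * (conj (a p.1) * a p.2))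
      (conj S) := by
    refine ((Equiv.prodComm ℤ ℤ).hasSum_iff.2 (Complex.hasSum_conj'.2 hS)).congr_fun fun p => ?_
    simp only [Function.comp_apply, Equiv.prodComm_apply, Prod.fst_swap, Prod.snd_swap, map_mul,
      Complex.conj_conj, map_intCast]
    ring
  have hsymm : S + conj S = 2 * (P + conj P) := by
    refine (hS.add hswap).unique (((hP.add hneg).mul_left 2).congr_fun fun p => ?_)
    have h := congrArg (Int.cast : ℤ → ℂ) (one_sub_sign_mul_sq_add_swap p.1 p.2)
    push_cast at h ⊢
    linear_combination conj (a p.1) * a p.2 * h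
  have hre : S.re = 2 * P.re := by
    have h := congrArg Complex.re hsymm
    simp only [Complex.add_re, Complex.conj_re, Complex.mul_re, Complex.re_ofNat,
      Complex.im_ofNat, zero_mul, sub_zero] at h
    linarith
  rw [hre]
  exact (hasSum_normSq_tsum_Ioi ha hP).mul_left 2

theorem tsum_Ioi_eq_add_tsum_Ioi (ha : Summable a) (j : ℤ) :
    ∑' n : Set.Ioi j, a n = a (j + 1) + ∑' n : Set.Ioi (j + 1), a n := by
  have hset : Set.Ioi j = {j + 1} ∪ Set.Ioi (j + 1) := by
    ext n
    simp only [Set.mem_Ioi, Set.mem_union, Set.mem_singleton_iff]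
    omega
  rw [hset, Summable.tsum_union_disjoint (by simp) (ha.subtype _) (ha.subtype _),
    tsum_singleton (j + 1) a]

end HermitianForm

section FourierCoefficients

theorem fourier_two_pi_apply (n : ℤ) (x : ℝ) :
    fourier n (x : 𝕋) = Complex.exp (Complex.I * n * x) := by
  rw [fourier_coe_apply]
  congr 1
  have hpi : (π : ℂ) ≠ 0 := Complex.ofReal_ne_zero.2 pi_ne_zero
  push_cast
  field_simp

theorem norm_mul_fourier {T : ℝ} (c : ℂ) (n : ℤ) (x : AddCircle T) :
    ‖c * fourier n x‖ = ‖c‖ := by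
  rw [norm_mul, fourier_apply, Circle.norm_coe, mul_one]

variable {f : ℝ → ℝ}

theorem fourierC_eq_fourierCoeff {g : 𝕋 → ℂ} (hg : ∀ x : ℝ, g x = f x) (n : ℤ) :
    fourierC f n = fourierCoeff g n := by
  have hexp (x : ℝ) : Complex.exp (-Complex.I * n * x) = fourier (-n) (x : 𝕋) := by
    rw [fourier_two_pi_apply, Int.cast_neg, mul_neg, neg_mul]
  rw [fourierCoeff_eq_intervalIntegral g n 0, fourierC, zero_add, Complex.real_smul]
  push_cast
  simp only [hexp, hg, smul_eq_mul, mul_comm (fourier _ _)]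

theorem fourierC_neg (f : ℝ → ℝ) (n : ℤ) : fourierC f (-n) = conj (fourierC f n) := by
  simp only [fourierC, map_mul, ← intervalIntegral.intervalIntegral_conj, ← Complex.exp_conj,
    map_div₀, map_one, map_neg, Complex.conj_I, Complex.conj_ofReal, Complex.conj_ofNat,
    map_intCast, Int.cast_neg, mul_neg, neg_mul]

theorem fourierC_deriv (hf : ContDiff ℝ 1 f) (hper : Function.Periodic f (2 * π)) (n : ℤ) :
    fourierC (deriv f) n = Complex.I * n * fourierC f n := by
  have hderiv (x : ℝ) : HasDerivAt (fun x : ℝ => (f x : ℂ)) (deriv f x : ℝ) x :=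
    (hf.differentiable one_ne_zero x).hasDerivAt.ofReal_comp
  have hexp (x : ℝ) : HasDerivAt (fun x : ℝ => Complex.exp (-Complex.I * n * x))
      (Complex.exp (-Complex.I * n * x) * (-Complex.I * n)) x := by
    simpa only [Complex.ofReal_one, mul_one] using
      ((hasDerivAt_id' x).ofReal_comp.const_mul (-Complex.I * n : ℂ)).cexp
  have hparts := intervalIntegral.integral_mul_deriv_eq_deriv_mul (a := 0) (b := 2 * π)
    (fun x _ => hderiv x) (fun x _ => hexp x)
    ((Complex.continuous_ofReal.comp (hf.continuous_deriv le_rfl)).intervalIntegrable _ _)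
    (Continuous.intervalIntegrable (by fun_prop) _ _)
  have hexp_two_pi : Complex.exp (-Complex.I * n * (2 * π : ℝ)) = 1 :=
    Complex.exp_eq_one_iff.2 ⟨-n, by push_cast; ring⟩
  have hf0 : f (2 * π) = f 0 := hper.eq
  simp only [hf0, hexp_two_pi, ← mul_assoc, intervalIntegral.integral_mul_const,
    Complex.ofReal_zero, mul_zero, Complex.exp_zero, sub_self, zero_sub] at hparts
  rw [fourierC, fourierC]
  linear_combination (1 / (2 * π : ℂ)) * hparts

theorem periodic_deriv {c : ℝ} (hper : Function.Periodic f c) : Function.Periodic (deriv f) c :=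
  fun x => by rw [← deriv_comp_add_const, hper.funext]

theorem exists_continuousMap_addCircle (hf : Continuous f) (hper : Function.Periodic f (2 * π)) :
    ∃ g : C(𝕋, ℂ), ∀ x : ℝ, g x = f x := by
  have hper' : Function.Periodic (fun x => (f x : ℂ)) (2 * π) := hper.comp Complex.ofReal
  exact ⟨⟨hper'.lift, (Complex.continuous_ofReal.comp hf).quotient_liftOn' _⟩, hper'.lift_coe⟩

theorem summable_sq_norm_fourierC (hf : Continuous f) (hper : Function.Periodic f (2 * π)) :
    Summable fun n => ‖fourierC f n‖ ^ 2 := by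
  obtain ⟨g, hg⟩ := exists_continuousMap_addCircle hf hper
  simpa only [fourierC_eq_fourierCoeff hg, fourierCoeff_toLp] using
    (hasSum_sq_fourierCoeff (g.toLp (E := ℂ) 2 AddCircle.haarAddCircle ℂ)).summable

theorem summable_fourierC (hf : ContDiff ℝ 1 f) (hper : Function.Periodic f (2 * π)) :
    Summable (fourierC f) := by
  have hbound : Summable fun n : ℤ => 1 / (n : ℝ) ^ 2 + ‖fourierC (deriv f) n‖ ^ 2 :=
    (summable_one_div_int_pow.2 one_lt_two).add
      (summable_sq_norm_fourierC (hf.continuous_deriv le_rfl) (periodic_deriv hper))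
  refine hbound.of_norm_bounded_eventually ?_
  filter_upwards [(Set.finite_singleton (0 : ℤ)).compl_mem_cofinite] with n hn
  have hn0 : (0 : ℝ) < |(n : ℝ)| := abs_pos.2 (Int.cast_ne_zero.2 hn)
  rw [fourierC_deriv hf hper, norm_mul, norm_mul, Complex.norm_I, one_mul, Complex.norm_intCast,
    ← sq_abs (n : ℝ)]
  have hcancel : ‖fourierC f n‖ = 1 / |(n : ℝ)| * (|(n : ℝ)| * ‖fourierC f n‖) := by field_simp
  rw [← one_div_pow]
  nlinarith [two_mul_le_add_sq (1 / |(n : ℝ)|) (|(n : ℝ)| * ‖fourierC f n‖),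
    norm_nonneg (fourierC f n)]

theorem hasSum_fourierC_mul_fourier (hf : ContDiff ℝ 1 f) (hper : Function.Periodic f (2 * π))
    (x : ℝ) : HasSum (fun n => fourierC f n * fourier n (x : 𝕋)) (f x : ℂ) := by
  obtain ⟨g, hg⟩ := exists_continuousMap_addCircle hf.continuous hper
  have hsum : Summable (fourierCoeff g) := (summable_congr (fourierC_eq_fourierCoeff hg)).1 <|
    summable_fourierC hf hper
  simpa only [← fourierC_eq_fourierCoeff hg, hg, smul_eq_mul] using
    has_pointwise_sum_fourier_series_of_summable hsum (x : 𝕋)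

end FourierCoefficients

section TrigSeries

theorem hasSum_fourierCoeff {ι : Type*} {T : ℝ} [Fact (0 < T)] {F : ι → C(AddCircle T, ℂ)}
    {g : C(AddCircle T, ℂ)} (hF : HasSum F g) (k : ℤ) :
    HasSum (fun i => fourierCoeff (F i) k) (fourierCoeff g k) := by
  have hinner (g : C(AddCircle T, ℂ)) : innerSL ℂ (fourierLp 2 k)
      (g.toLp 2 AddCircle.haarAddCircle ℂ) = fourierCoeff g k := by
    rw [innerSL_apply_apply, ← coe_fourierBasis, ← HilbertBasis.repr_apply_apply,
      fourierBasis_repr, fourierCoeff_toLp]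
  simpa only [ContinuousLinearMap.comp_apply, hinner] using
    ((innerSL ℂ (fourierLp 2 k)).comp (ContinuousMap.toLp 2 AddCircle.haarAddCircle ℂ)).hasSum hF

theorem ofReal_hilbertT_of_hasSum {f : ℝ → ℝ} {x : ℝ} {S : ℂ} (hS : HasSum (fun k : ℤ =>
      -Complex.I * k.sign * fourierC f k * fourier k (x : 𝕋)) S) :
    (hilbertT f x : ℂ) = S := by
  have hconj : conj S = S := by
    refine (Complex.hasSum_conj'.2 hS).unique
      (((Equiv.neg ℤ).hasSum_iff.2 hS).congr_fun fun k => ?_)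
    simp only [Function.comp_apply, Equiv.neg_apply, Int.sign_neg, Int.cast_neg, fourierC_neg,
      fourier_neg, map_mul, map_neg, Complex.conj_I, map_intCast]
    ring
  simp only [fourier_two_pi_apply] at hS
  rw [hilbertT, hS.tsum_eq, Complex.conj_eq_iff_re.1 hconj]

/-- `f` is the sum of the absolutely convergent trigonometric series `∑ᵢ aᵢ e^{i Nᵢ x}`. The index
type is arbitrary, so that a product of two series need not be regrouped by frequency. -/
structure HasTrigSeries {ι : Type*} (f : ℝ → ℝ) (N : ι → ℤ) (a : ι → ℂ) : Prop where
  summable : Summable a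
  hasSum (x : ℝ) : HasSum (fun i => a i * fourier (N i) (x : 𝕋)) (f x : ℂ)

theorem hasTrigSeries_fourierC {f : ℝ → ℝ} (hf : ContDiff ℝ 1 f)
    (hper : Function.Periodic f (2 * π)) : HasTrigSeries f id (fourierC f) where
  summable := summable_fourierC hf hper
  hasSum x := hasSum_fourierC_mul_fourier hf hper x

namespace HasTrigSeries

variable {ι κ : Type*} {f g : ℝ → ℝ} {N : ι → ℤ} {M : κ → ℤ} {a : ι → ℂ} {b : κ → ℂ}

theorem hasSum_fourierC (h : HasTrigSeries f N a) (k : ℤ) :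
    HasSum ({i | N i = k}.indicator a) (fourierC f k) := by
  let F (i : ι) : C(𝕋, ℂ) := a i • fourier (N i)
  have hF : Summable F := Summable.of_norm <| by
    simpa only [F, norm_smul, fourier_norm, mul_one] using h.summable.norm
  have hg (x : ℝ) : (∑' i, F i) x = (f x : ℂ) :=
    ((ContinuousMap.evalCLM ℂ (x : 𝕋)).hasSum hF.hasSum).unique (h.hasSum x)
  rw [fourierC_eq_fourierCoeff hg]
  refine (hasSum_fourierCoeff hF.hasSum k).congr_fun fun i => ?_
  rw [ContinuousMap.coe_smul, fourierCoeff.const_smul, fourierCoeff_fourier, Pi.single_apply]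
  by_cases hi : N i = k
  · simp [hi]
  · simp [hi, Ne.symm hi]

theorem mul (hf : HasTrigSeries f N a) (hg : HasTrigSeries g M b) :
    HasTrigSeries (fun x => f x * g x) (fun p : ι × κ => M p.2 - N p.1)
      (fun p => conj (a p.1) * b p.2) where
  summable := (hasSum_conj_mul hf.summable.hasSum hg.summable.hasSum).summable
  hasSum x := by
    rw [Complex.ofReal_mul, ← Complex.conj_ofReal (f x)]
    refine (hasSum_conj_mul (hf.hasSum x) (hg.hasSum x)).congr_fun fun p => ?_
    rw [sub_eq_add_neg, fourier_add, fourier_neg, map_mul]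
    ring

theorem hilbert (h : HasTrigSeries f N a) :
    HasTrigSeries (hilbertT f) N (fun i => -Complex.I * (N i).sign * a i) := by
  have hsum : Summable fun i => -Complex.I * (N i).sign * a i := by
    refine h.summable.norm.of_norm_bounded fun i => ?_
    rw [norm_mul, norm_mul, norm_neg, Complex.norm_I, one_mul, Complex.norm_intCast]
    refine mul_le_of_le_one_left (norm_nonneg _) ?_
    rcases (N i).sign_trichotomy with hi | hi | hi <;> simp [hi]
  refine ⟨hsum, fun x => ?_⟩
  have hterms : Summable fun i => -Complex.I * (N i).sign * a i * fourier (N i) (x : 𝕋) :=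
    hsum.norm.of_norm_bounded fun i => (norm_mul_fourier _ _ _).le
  have hfiber (k : ℤ) : HasSum (fun i : {i // N i = k} =>
      -Complex.I * (N i).sign * a i * fourier (N i) (x : 𝕋))
      (-Complex.I * k.sign * fourierC f k * fourier k (x : 𝕋)) := by
    refine (((hasSum_subtype_iff_indicator.2 (h.hasSum_fourierC k)).mul_left
      (-Complex.I * k.sign : ℂ)).mul_right (fourier k (x : 𝕋))).congr_fun fun i => ?_
    rw [Function.comp_apply, show N i = k from i.2]
  rw [ofReal_hilbertT_of_hasSum
    (((Equiv.sigmaFiberEquiv N).hasSum_iff.2 hterms.hasSum).sigma hfiber)]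
  exact hterms.hasSum

end HasTrigSeries

end TrigSeries

section Fmagic

variable {u : ℝ → ℝ}

theorem hasTrigSeries_deriv_deriv (hu : ContDiff ℝ 3 u) (hper : Function.Periodic u (2 * π)) :
    HasTrigSeries (deriv (deriv u)) id (fun n => -(n : ℂ) ^ 2 * fourierC u n) := by
  have hu' : ContDiff ℝ 2 (deriv u) := hu.deriv'
  have hu'' : ContDiff ℝ 1 (deriv (deriv u)) := hu'.deriv'
  convert hasTrigSeries_fourierC hu'' (periodic_deriv (periodic_deriv hper)) using 1
  ext n
  rw [fourierC_deriv (hu'.of_le one_le_two) (periodic_deriv hper),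
    fourierC_deriv (hu.of_le (by norm_num)) hper]
  linear_combination -(n : ℂ) ^ 2 * fourierC u n * Complex.I_sq

theorem hasSum_sign_kernel_Fmagic (hu : ContDiff ℝ 3 u) (hper : Function.Periodic u (2 * π))
    (θ : ℝ) :
    HasSum (fun p : ℤ × ℤ => (((1 - (p.2 - p.1).sign * p.2.sign) * p.2 ^ 2 : ℤ) : ℂ) *
      (conj (fourierC u p.1 * fourier p.1 (θ : 𝕋)) * (fourierC u p.2 * fourier p.2 (θ : 𝕋))))
      (Fmagic u θ : ℂ) := by
  have hseries := hasTrigSeries_fourierC (hu.of_le (by norm_num)) hper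
  have hseries'' := hasTrigSeries_deriv_deriv hu hper
  have hprod := (hseries.mul hseries'').hasSum θ
  have hhilbert := (hseries.mul hseries''.hilbert).hilbert.hasSum θ
  rw [Fmagic, Complex.ofReal_sub, Complex.ofReal_neg]
  refine (hprod.neg.sub hhilbert).congr_fun fun p => ?_
  have hfourier : fourier (p.2 - p.1) (θ : 𝕋) =
      fourier p.2 (θ : 𝕋) * conj (fourier p.1 (θ : 𝕋)) := by
    rw [sub_eq_add_neg, fourier_add, fourier_neg]
  simp only [id, hfourier, map_mul, Int.cast_mul, Int.cast_sub, Int.cast_one, Int.cast_pow]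
  linear_combination -((p.2 - p.1).sign * p.2.sign * p.2 ^ 2 *
    (conj (fourierC u p.1) * conj (fourier p.1 (θ : 𝕋)) *
      (fourierC u p.2 * fourier p.2 (θ : 𝕋))) : ℂ) * Complex.I_sq

theorem hasSum_Fmagic (hu : ContDiff ℝ 3 u) (hper : Function.Periodic u (2 * π)) (θ : ℝ) :
    HasSum (fun j : ℕ => 2 * ((2 * j + 1) *
      ‖∑' n : Set.Ioi (j : ℤ), fourierC u n * fourier n (θ : 𝕋)‖ ^ 2)) (Fmagic u θ) := by
  have hsq : Summable fun n : ℤ => (n : ℝ) ^ 2 * ‖fourierC u n * fourier n (θ : 𝕋)‖ := by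
    simpa only [norm_mul_fourier, norm_mul _ (fourierC _ _), norm_neg, norm_pow,
      Complex.norm_intCast, sq_abs] using
      (hasTrigSeries_deriv_deriv hu hper).summable.norm
  have hsum : Summable fun n : ℤ => fourierC u n * fourier n (θ : 𝕋) :=
    ((hasTrigSeries_fourierC (hu.of_le (by norm_num)) hper).hasSum θ).summable
  have hconj (n : ℤ) : fourierC u (-n) * fourier (-n) (θ : 𝕋) =
      conj (fourierC u n * fourier n (θ : 𝕋)) := by
    rw [fourierC_neg, fourier_neg, map_mul]
  simpa only [Complex.ofReal_re] using
    hasSum_normSq_tsum_Ioi_of_sign_kernel (a := fun n => fourierC u n * fourier n (θ : 𝕋))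
      (S := (Fmagic u θ : ℂ)) hconj hsum hsq (hasSum_sign_kernel_Fmagic hu hper θ)

theorem exists_fourierC_succ_ne_zero (hu : ContDiff ℝ 1 u) (hper : Function.Periodic u (2 * π))
    (hnonconst : ∃ x y, u x ≠ u y) : ∃ j : ℕ, fourierC u (j + 1) ≠ 0 := by
  by_contra! hzero
  have hzero' (n : ℤ) (hn : n ≠ 0) : fourierC u n = 0 := by
    obtain ⟨j, hj | hj⟩ : ∃ j : ℕ, n = j + 1 ∨ n = -(j + 1) := ⟨n.natAbs - 1, by omega⟩
    · rw [hj, hzero]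
    · rw [hj, fourierC_neg, hzero, map_zero]
  have hconst (x : ℝ) : (u x : ℂ) = fourierC u 0 := by
    have h := hasSum_single (f := fun n : ℤ => fourierC u n * fourier n (x : 𝕋)) 0
      fun n hn => by rw [hzero' n hn, zero_mul]
    simpa only [fourier_zero, mul_one] using
      ((hasTrigSeries_fourierC hu hper).hasSum x).unique h
  obtain ⟨x, y, hxy⟩ := hnonconst
  exact hxy (Complex.ofReal_injective ((hconst x).trans (hconst y).symm))

theorem exists_tsum_Ioi_ne_zero {a : ℤ → ℂ} (ha : Summable a) {j : ℕ} (hj : a (j + 1) ≠ 0) :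
    ∃ k : ℕ, ∑' n : Set.Ioi (k : ℤ), a n ≠ 0 := by
  by_contra! hzero
  have h := tsum_Ioi_eq_add_tsum_Ioi ha j
  rw [hzero j, ← Nat.cast_succ, hzero (j + 1), add_zero] at h
  exact hj (by exact_mod_cast h.symm)

theorem Fmagic_pos_general (hu : ContDiff ℝ 3 u) (hper : Function.Periodic u (2 * π))
    (hnonconst : ∃ x y, u x ≠ u y) (θ : ℝ) : 0 < Fmagic u θ := by
  have hu1 : ContDiff ℝ 1 u := hu.of_le (by norm_num)
  obtain ⟨j, hj⟩ := exists_fourierC_succ_ne_zero hu1 hper hnonconst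
  obtain ⟨k, hk⟩ := exists_tsum_Ioi_ne_zero
    ((hasTrigSeries_fourierC hu1 hper).hasSum θ).summable (j := j)
    (mul_ne_zero hj (Circle.coe_ne_zero _))
  have hF := hasSum_Fmagic hu hper θ
  rw [← hF.tsum_eq]
  exact hF.summable.tsum_pos (fun j => by positivity) k (by positivity)

end Fmagic

/-- For smooth nonconstant mean-zero `u : S¹ → ℝ`,
the function `F = −u·u″ − H(u·H(u″))` is everywhere positive. -/
theorem Fmagic_pos (u : ℝ → ℝ)
    (hu : ContDiff ℝ (⊤ : ℕ∞) u)
    (hper : ∀ θ : ℝ, u (θ + 2 * π) = u θ)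
    (hmean : (∫ θ in (0:ℝ)..(2 * π), u θ) = 0)
    (hnonconst : ∃ a b : ℝ, u a ≠ u b) :
    ∀ θ : ℝ, 0 < Fmagic u θ :=
  Fmagic_pos_general (contDiff_infty.1 hu 3) hper hnonconst
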